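/- Let R be a commutative ring and n ≥ 1. Then every matrix in M_n(R) is a sum of three involutive matrices (A = U_1 + U_2 + U_3 with U_i^2 = I_n for each i) if and only if 3 = 0 in R and R satisfies the identity x^3 = x (equivalently, R is a subdirect product of copies of Z_3). -/

import Mathlib

lemma aux_odd {F ι : Type*} [Field F] [Fintype ι] [DecidableEq ι] (h2 : (2 : F) ≠ 0)
    (h3 : (3 : F) ≠ 0) (hodd : Odd (Fintype.card ι)) (U V W : Matrix ι ι F)
    (hU : U * U = 1) (hV : V * V = 1) (hW : W * W = 1) (hs : U + V + W = 0) : False := by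
  have hW' : W = -(U + V) := by
    rw [← sub_eq_zero, ← hs]; abel
  have hUV : U * V + V * U = -1 := by
    have : W * W = U * U + V * V + (U * V + V * U) := by rw [hW']; noncomm_ring
    rw [hU, hV, hW] at this
    have h : U * V + V * U = (1 : Matrix ι ι F) - (1 + 1) := eq_sub_of_add_eq' this.symm
    rw [h]; abel
  have hD2 : (V - W) * (V - W) = (3 : F) • (1 : Matrix ι ι F) := by
    have : (V - W) * (V - W) = U * U + (4 : F) • (V * V) + (2 : F) • (U * V + V * U) := by
      rw [hW']
      have e4 : (4 : F) • (V * V) = V * V + V * V + V * V + V * V := by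
        rw [show (4 : F) = 1 + 1 + 1 + 1 by norm_num]; simp only [add_smul, one_smul]
      rw [e4, two_smul]; noncomm_ring
    rw [this, hU, hV, hUV]
    rw [smul_neg, ← sub_eq_add_neg]
    nth_rewrite 1 [← one_smul F (1 : Matrix ι ι F)]
    rw [← add_smul, ← sub_smul]; norm_num
  have hanti : U * (V - W) = -((V - W) * U) := by
    have : U * (V - W) + (V - W) * U = U * U + U * U + (U * V + V * U) + (U * V + V * U) := by
      rw [hW']; noncomm_ring
    rw [hU, hUV] at this
    rw [← sub_eq_zero, sub_neg_eq_add, this]; abel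
  have d1 := congrArg Matrix.det hanti
  have d2 := congrArg Matrix.det hD2
  have d3 := congrArg Matrix.det hU
  rw [Matrix.det_neg, hodd.neg_one_pow, Matrix.det_mul, Matrix.det_mul] at d1
  rw [Matrix.det_mul, Matrix.det_smul, Matrix.det_one, mul_one] at d2
  rw [Matrix.det_mul, Matrix.det_one] at d3
  have hu : U.det ≠ 0 := by rintro h; simp [h] at d3
  have hd : (V - W).det ≠ 0 := by
    rintro h; rw [h] at d2; simp at d2
    exact pow_ne_zero _ h3 d2.symm
  have : (2 : F) * (U.det * (V - W).det) = 0 := by linear_combination d1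
  exact mul_ne_zero h2 (mul_ne_zero hu hd) this

/-- the square of the sum of two involutions commutes with each of them -/
lemma aux_comm {S : Type*} [Ring S] (U V : S) (hU : U * U = 1) (hV : V * V = 1) :
    U * ((U + V) * (U + V)) = ((U + V) * (U + V)) * U ∧
    V * ((U + V) * (U + V)) = ((U + V) * (U + V)) * V := by
  have e : (U + V) * (U + V) = 2 + (U * V + V * U) := by
    have : (U + V) * (U + V) = U * U + V * V + (U * V + V * U) := by noncomm_ring
    rw [this, hU, hV]; norm_num
  rw [e]
  have a1 : U * (U * V) = V := by rw [← mul_assoc, hU, one_mul]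
  have a2 : V * (V * U) = U := by rw [← mul_assoc, hV, one_mul]
  constructor
  · simp only [mul_add, add_mul, mul_assoc, a1, hU, mul_one]
    rw [mul_two, two_mul]; abel
  · simp only [mul_add, add_mul, mul_assoc, a2, hV, mul_one]
    rw [mul_two, two_mul]; abel

section
variable {F : Type*} [Field F] {m : ℕ}

lemma aux_C (U V W : Matrix (Fin (m+1)) (Fin (m+1)) F)
    (hU : U * U = 1) (hV : V * V = 1) (hW : W * W = 1) (hs : U + V + W = Matrix.single 0 0 1) :
    ∃ C : Matrix (Fin (m+1)) (Fin (m+1)) F, U * C = C * U ∧ V * C = C * V ∧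
      ∀ i j, C i j = (if i = 0 ∧ j = 0 then 1 else 0) - (if i = 0 then W 0 j else 0)
        - (if j = 0 then W i 0 else 0) := by
  set E : Matrix (Fin (m+1)) (Fin (m+1)) F := Matrix.single 0 0 1 with hE
  have hS : U + V = E - W := by rw [← hs]; abel
  have hEE : E * E = E := by simp [hE]
  have hsq : (U + V) * (U + V) = 1 + (E - E * W - W * E) := by
    have : (E - W) * (E - W) = W * W + (E * E - E * W - W * E) := by noncomm_ring
    rw [hS, this, hW, hEE]
  obtain ⟨c1, c2⟩ := aux_comm U V hU hV
  rw [hsq] at c1 c2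
  refine ⟨E - E * W - W * E, ?_, ?_, ?_⟩
  · simpa [mul_add, add_mul] using c1
  · simpa [mul_add, add_mul] using c2
  · intro i j
    simp only [Matrix.sub_apply]
    congr 1
    · congr 1
      · simp [hE, Matrix.single_apply, eq_comm]
      · simp [hE, Matrix.mul_apply, Matrix.single_apply, ite_and, eq_comm]
    · simp [hE, Matrix.mul_apply, Matrix.single_apply, ite_and, eq_comm]

lemma aux_sub (U : Matrix (Fin (m+1)) (Fin (m+1)) F) (hU : U * U = 1)
    (h : ∀ i : Fin m, U i.succ 0 = 0) :
    U.submatrix Fin.succ Fin.succ * U.submatrix Fin.succ Fin.succ = 1 := by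
  ext i j
  have := congrFun (congrFun hU i.succ) j.succ
  rw [Matrix.mul_apply, Fin.sum_univ_succ, h, zero_mul, zero_add] at this
  rw [Matrix.mul_apply]
  simp only [Matrix.submatrix_apply]
  rw [this]; simp [Matrix.one_apply]

lemma aux_col (h2 : (2 : F) ≠ 0) (h3 : (3 : F) ≠ 0) (hm : Odd m)
    (U V W : Matrix (Fin (m+1)) (Fin (m+1)) F)
    (hU : U * U = 1) (hV : V * V = 1) (hW : W * W = 1) (hs : U + V + W = Matrix.single 0 0 1)
    (hcol : ∀ i : Fin m, W i.succ 0 = 0) : False := by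
  obtain ⟨C, cU, cV, hC⟩ := aux_C U V W hU hV hW hs
  have hu : W 0 0 * W 0 0 = 1 := by
    have := congrFun (congrFun hW 0) 0
    rw [Matrix.mul_apply, Fin.sum_univ_succ] at this
    simpa [hcol] using this
  have hC0 : ∀ (i : Fin m) j, C i.succ j = 0 := by
    intro i j; rw [hC]; simp [hcol, Fin.succ_ne_zero]
  have hC00 : C 0 0 ≠ 0 := by
    rw [hC]; simp
    intro h
    have : (3 : F) = 0 := by linear_combination (-4 : F) * hu - (2 * W 0 0 + 1) * h
    exact h3 this
  have key : ∀ X : Matrix (Fin (m+1)) (Fin (m+1)) F, X * C = C * X → ∀ i : Fin m, X i.succ 0 = 0 := by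
    intro X hX i
    have := congrFun (congrFun hX i.succ) 0
    rw [Matrix.mul_apply, Matrix.mul_apply, Fin.sum_univ_succ] at this
    simp only [hC0, mul_zero, zero_mul, Finset.sum_const_zero, add_zero] at this
    exact (mul_eq_zero.mp this).resolve_right hC00
  refine aux_odd h2 h3 (by simpa using hm) _ _ _ (aux_sub U hU (key U cU)) (aux_sub V hV (key V cV))
    (aux_sub W hW hcol) ?_
  ext i j
  have := congrFun (congrFun hs i.succ) j.succ
  simpa [Matrix.single_apply, Fin.succ_ne_zero, (Fin.succ_ne_zero _).symm] using this

lemma aux_even (h2 : (2 : F) ≠ 0) (h3 : (3 : F) ≠ 0) (hm : Odd m)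
    (U V W : Matrix (Fin (m+1)) (Fin (m+1)) F)
    (hU : U * U = 1) (hV : V * V = 1) (hW : W * W = 1) (hs : U + V + W = Matrix.single 0 0 1) :
    False := by
  by_cases hcol : ∀ i : Fin m, W i.succ 0 = 0
  · exact aux_col h2 h3 hm U V W hU hV hW hs hcol
  by_cases hrow : ∀ i : Fin m, W 0 i.succ = 0
  · refine aux_col h2 h3 hm U.transpose V.transpose W.transpose ?_ ?_ ?_ ?_ hrow
    · rw [← Matrix.transpose_mul, hU, Matrix.transpose_one]
    · rw [← Matrix.transpose_mul, hV, Matrix.transpose_one]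
    · rw [← Matrix.transpose_mul, hW, Matrix.transpose_one]
    · rw [← Matrix.transpose_add, ← Matrix.transpose_add, hs, Matrix.transpose_single]
  push Not at hcol hrow
  obtain ⟨i, hi⟩ := hcol
  obtain ⟨j, hj⟩ := hrow
  obtain ⟨C, cU, cV, hC⟩ := aux_C U V W hU hV hW hs
  set e : Fin (m+1) → F := Pi.single 0 1 with he
  set g : Fin (m+1) → F := W.mulVec e with hg
  have hg' : ∀ k, g k = W k 0 := by intro k; simp [hg, he]
  have hCW : ∀ x, ∃ a b : F, C.mulVec x = a • e + b • g := by
    intro x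
    refine ⟨x 0 - ∑ k, W 0 k * x k, - x 0, ?_⟩
    ext k
    simp only [Matrix.mulVec, dotProduct, hC, Pi.add_apply, Pi.smul_apply, hg', smul_eq_mul, he,
      sub_mul, Finset.sum_sub_distrib]
    by_cases hk : k = 0
    · subst hk; simp; ring
    · simp [hk]; ring
  have hCe : C.mulVec e = e - W 0 0 • e - g := by
    ext k
    simp only [he, Matrix.mulVec_single_one, Matrix.col_apply, hC, Pi.sub_apply, Pi.smul_apply, hg']
    by_cases hk : k = 0
    · subst hk; simp
    · simp [hk]
  have hCj : C.mulVec (Pi.single j.succ 1) = - W 0 j.succ • e := by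
    ext k
    simp only [he, Matrix.mulVec_single_one, Matrix.col_apply, hC, Pi.smul_apply]
    by_cases hk : k = 0
    · subst hk; simp [Fin.succ_ne_zero]
    · simp [hk, Fin.succ_ne_zero]
  have hind : ∀ a b c d : F, a • e + b • g = c • e + d • g → a = c ∧ b = d := by
    intro a b c d h
    have h1 := congrFun h i.succ
    simp [he, hg', Fin.succ_ne_zero] at h1
    have hbd := h1.resolve_right hi
    have h0 := congrFun h 0
    simp [he, hg', hbd] at h0
    exact ⟨h0, hbd⟩
  obtain ⟨α, β, hUe⟩ : ∃ α β : F, U.mulVec e = α • e + β • g := by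
    obtain ⟨a, b, hab⟩ := hCW (U.mulVec (Pi.single j.succ 1))
    rw [Matrix.mulVec_mulVec, ← cU, ← Matrix.mulVec_mulVec, hCj, Matrix.mulVec_smul] at hab
    refine ⟨(- W 0 j.succ)⁻¹ * a, (- W 0 j.succ)⁻¹ * b, ?_⟩
    rw [mul_smul, mul_smul, ← smul_add, ← hab, smul_smul, inv_mul_cancel₀ (neg_ne_zero.mpr hj), one_smul]
  obtain ⟨γ, δ, hUg⟩ : ∃ α β : F, U.mulVec g = α • e + β • g := by
    obtain ⟨a, b, hab⟩ := hCW (U.mulVec e)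
    rw [Matrix.mulVec_mulVec, ← cU, ← Matrix.mulVec_mulVec, hCe, Matrix.mulVec_sub,
      Matrix.mulVec_sub, Matrix.mulVec_smul, hUe] at hab
    refine ⟨α - W 0 0 * α - a, β - W 0 0 * β - b, ?_⟩
    have : U.mulVec g = (α • e + β • g - W 0 0 • (α • e + β • g)) - (a • e + b • g) := by
      rw [← hab]; abel
    rw [this]; module
  have hWg : W.mulVec g = e := by rw [hg, Matrix.mulVec_mulVec, hW, Matrix.one_mulVec]
  have hV' : V = Matrix.single 0 0 1 - W - U := by rw [← hs]; abel
  have hEx : ∀ x : Fin (m+1) → F, (Matrix.single (0 : Fin (m+1)) (0 : Fin (m+1)) (1:F)).mulVec x = x 0 • e := by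
    intro x; ext k
    simp [he, Matrix.mulVec, dotProduct, Matrix.single_apply, ite_and, Pi.single_apply, eq_comm]
  have hVe : V.mulVec e = (1 - α) • e + (-1 - β) • g := by
    rw [hV', Matrix.sub_mulVec, Matrix.sub_mulVec, hEx, hUe, ← hg]
    have : e 0 = 1 := by simp [he]
    rw [this]; module
  have hVg : V.mulVec g = (W 0 0 - 1 - γ) • e + (- δ) • g := by
    rw [hV', Matrix.sub_mulVec, Matrix.sub_mulVec, hEx, hUg, hWg, hg']
    module
  have hinv : ∀ (X : Matrix (Fin (m+1)) (Fin (m+1)) F) (a b c d : F), X * X = 1 →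
      X.mulVec e = a • e + b • g → X.mulVec g = c • e + d • g →
      a * a + b * c = 1 ∧ b * (a + d) = 0 ∧ b * c + d * d = 1 := by
    intro X a b c d hX h1 h2
    have t1 : X.mulVec (X.mulVec e) = e := by rw [Matrix.mulVec_mulVec, hX, Matrix.one_mulVec]
    have t2 : X.mulVec (X.mulVec g) = g := by rw [Matrix.mulVec_mulVec, hX, Matrix.one_mulVec]
    rw [h1, Matrix.mulVec_add, Matrix.mulVec_smul, Matrix.mulVec_smul, h1, h2] at t1
    rw [h2, Matrix.mulVec_add, Matrix.mulVec_smul, Matrix.mulVec_smul, h1, h2] at t2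
    have s1 := hind (a * a + b * c) (b * (a + d)) 1 0 (by
      rw [one_smul, zero_smul, add_zero]; refine Eq.trans ?_ t1; module)
    have s2 := hind (c * (a + d)) (b * c + d * d) 0 1 (by
      rw [one_smul, zero_smul, zero_add]; refine Eq.trans ?_ t2; module)
    exact ⟨s1.1, s1.2, s2.2⟩
  obtain ⟨a1, a2, a3⟩ := hinv U α β γ δ hU hUe hUg
  obtain ⟨b1, b2, b3⟩ := hinv V _ _ _ _ hV hVe hVg
  rcases mul_eq_zero.mp a2 with hb | hb
  · subst hb
    have hs1 : α + δ = 1 := by linear_combination b2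
    have : (3 : F) = 0 := by
      have hδ : δ = 1 - α := by linear_combination hs1
      subst hδ
      have h1 : 2 * α = 1 := by linear_combination a1 - a3
      linear_combination (-4:F) * a1 + (2 * α + 1) * h1
    exact h3 this
  · rcases mul_eq_zero.mp b2 with hb' | hb'
    · have hβ : β = -1 := by linear_combination -hb'
      have hδ : δ = -α := by linear_combination hb
      subst hβ hδ
      -- use V : (1-α)^2 = 1 , δ^2 = 1
      have h1 : (1 - α) * (1 - α) = 1 := by linear_combination b1
      have h2' : α * α = 1 := by linear_combination b3
      have h1 : 2 * α = 1 := by linear_combination h2' - h1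
      have : (3 : F) = 0 := by linear_combination (-4:F) * h2' + (2 * α + 1) * h1
      exact h3 this
    · have : (1 : F) = 0 := by linear_combination hb + hb'
      exact one_ne_zero this

end

def AllSum (R : Type*) [CommRing R] (n : ℕ) : Prop :=
  ∀ A : Matrix (Fin n) (Fin n) R,
      ∃ U₁ U₂ U₃ : Matrix (Fin n) (Fin n) R,
        U₁ ^ 2 = 1 ∧ U₂ ^ 2 = 1 ∧ U₃ ^ 2 = 1 ∧ A = U₁ + U₂ + U₃

lemma AllSum.map {R S : Type*} [CommRing R] [CommRing S] {n : ℕ} (h : AllSum R n) (f : R →+* S)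
    (hf : Function.Surjective f) : AllSum S n := by
  intro A
  choose g hg using hf
  obtain ⟨U, V, W, hU, hV, hW, hs⟩ := h (A.map g)
  refine ⟨f.mapMatrix U, f.mapMatrix V, f.mapMatrix W, ?_, ?_, ?_, ?_⟩
  · rw [← map_pow, hU, map_one]
  · rw [← map_pow, hV, map_one]
  · rw [← map_pow, hW, map_one]
  · rw [← map_add, ← map_add, ← hs]
    ext i j; simp [hg]

lemma AllSum.field_three {F : Type*} [Field F] {n : ℕ} (hn : 1 ≤ n) (h : AllSum F n) :
    (3 : F) = 0 := by
  by_contra h3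
  by_cases h2 : (2 : F) = 0
  · have htr : ∀ U : Matrix (Fin n) (Fin n) F, U ^ 2 = 1 → U.trace = n := by
      intro U hU
      have h2M : (2 : Matrix (Fin n) (Fin n) F) = 0 := by
        have := congrArg (Matrix.scalar (Fin n)) h2
        rwa [map_ofNat, map_zero] at this
      have hnil : IsNilpotent (U - 1) := by
        refine ⟨2, ?_⟩
        have : (U - 1) ^ 2 = U ^ 2 - 1 + 2 * (1 - U) := by noncomm_ring
        rw [this, hU, h2M]; simp
      have := (Matrix.isNilpotent_trace_of_isNilpotent hnil).eq_zero
      rw [Matrix.trace_sub, Matrix.trace_one, Fintype.card_fin, sub_eq_zero] at this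
      exact this
    have hall : ∀ A : Matrix (Fin n) (Fin n) F, A.trace = n + n + n := by
      intro A
      obtain ⟨U, V, W, hU, hV, hW, rfl⟩ := h A
      rw [Matrix.trace_add, Matrix.trace_add, htr U hU, htr V hV, htr W hW]
    have e1 := hall 0
    have e2 := hall (Matrix.single ⟨0, hn⟩ ⟨0, hn⟩ 1)
    rw [← e1] at e2
    simp at e2
  · rcases Nat.even_or_odd n with he | ho
    · obtain ⟨m, rfl⟩ : ∃ m, n = m + 1 := ⟨n - 1, by omega⟩
      have hm : Odd m := by
        rcases Nat.even_or_odd m with h' | h'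
        · exact absurd he (by simpa using h'.add_one)
        · exact h'
      obtain ⟨U, V, W, hU, hV, hW, hs⟩ := h (Matrix.single 0 0 1)
      rw [sq] at hU hV hW
      exact aux_even h2 h3 hm U V W hU hV hW hs.symm
    · obtain ⟨U, V, W, hU, hV, hW, hs⟩ := h 0
      rw [sq] at hU hV hW
      exact aux_odd h2 h3 (by simpa using ho) U V W hU hV hW hs.symm

lemma aux_U_comm {R M : Type*} [CommRing R] [Ring M] [Algebra R M] (a : R) (ha : IsUnit (2 * a))
    (U V W : M) (hU : U * U = 1) (hV : V * V = 1) (hW : W * W = 1)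
    (hs : U + V + W = algebraMap R M a) : U * W = W * U ∧ V * W = W * V := by
  obtain ⟨b, hb⟩ := ha.exists_right_inv
  have hS : U + V = algebraMap R M a - W := by rw [← hs]; abel
  have hca : algebraMap R M a * W = W * algebraMap R M a := Algebra.commutes a W
  have hsq : (U + V) * (U + V) = algebraMap R M (a * a + 1) - algebraMap R M (2 * a) * W := by
    rw [hS]
    have : (algebraMap R M a - W) * (algebraMap R M a - W) = algebraMap R M a * algebraMap R M a
      + W * W - (algebraMap R M a * W + W * algebraMap R M a) := by noncomm_ring
    rw [this, ← hca, hW, map_add, map_mul, map_one, map_mul, map_ofNat, mul_assoc, two_mul]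
  have hWeq : W = algebraMap R M b * (algebraMap R M (a * a + 1) - (U + V) * (U + V)) := by
    rw [hsq, sub_sub_cancel, ← mul_assoc, ← map_mul, mul_comm b, hb, map_one, one_mul]
  obtain ⟨c1, c2⟩ := aux_comm U V hU hV
  have key : ∀ X : M, X * ((U + V) * (U + V)) = ((U + V) * (U + V)) * X → X * W = W * X := by
    intro X hX
    have : Commute X (algebraMap R M b * (algebraMap R M (a * a + 1) - (U + V) * (U + V))) :=
      (Algebra.commute_algebraMap_right b X).mul_right
        ((Algebra.commute_algebraMap_right (a * a + 1) X).sub_right hX)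
    rw [← hWeq] at this
    exact this
  exact ⟨key U c1, key V c2⟩

lemma AllSum.unit_eq {R : Type*} [CommRing R] {n : ℕ} (hn : 1 ≤ n) (h : AllSum R n) (a : R)
    (ha : IsUnit (2 * a)) : (a ^ 2 - 3) ^ 2 = 4 * a ^ 2 := by
  obtain ⟨U, V, W, hU, hV, hW, hs⟩ := h (algebraMap R _ a)
  rw [sq] at hU hV hW
  obtain ⟨UW, VW⟩ := aux_U_comm a ha U V W hU hV hW hs.symm
  obtain ⟨-, UV⟩ := aux_U_comm a ha W U V hW hU hV (by rw [hs]; abel)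
  set q := U * V + U * W + V * W with hq
  set p := U * V * W with hp
  set s := algebraMap R (Matrix (Fin n) (Fin n) R) a with hsd
  have hps : p * s = q := by
    have e : p * s = V * (U * U) * W + U * (V * V) * W + U * V * (W * W) := by
      rw [hs]
      simp only [hp, mul_add]
      congr 1
      congr 1
      · calc U * V * W * U = U * V * (W * U) := by noncomm_ring
          _ = U * V * U * W := by rw [← UW]; noncomm_ring
          _ = _ := by rw [UV]; noncomm_ring
      · calc U * V * W * V = U * V * (W * V) := by noncomm_ring
          _ = _ := by rw [← VW]; noncomm_ring
      · noncomm_ring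
    rw [e, hU, hV, hW, hq]; simp; abel
  have hpp : p * p = 1 := by
    calc p * p = U * V * (W * (U * V)) * W := by rw [hp]; noncomm_ring
      _ = U * V * (U * V * W) * W := by rw [← mul_assoc W U V, ← UW, mul_assoc U W V, ← VW, mul_assoc U V W]
      _ = U * (V * U) * V * (W * W) := by noncomm_ring
      _ = (U * U) * (V * V) * (W * W) := by rw [← UV]; noncomm_ring
      _ = 1 := by rw [hU, hV, hW]; simp
  have hss : s * s = 3 + 2 * q := by
    have : s * s = U * U + V * V + W * W + (U * V + V * U + (U * W + W * U) + (V * W + W * V)) := by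
      rw [hs]; noncomm_ring
    rw [this, hU, hV, hW, ← UV, ← UW, ← VW, hq, two_mul,
      show (3 : Matrix (Fin n) (Fin n) R) = 1 + 1 + 1 by norm_num]; abel
  have h1 : s * s - 3 = 2 * (p * s) := by rw [hss, hps]; abel
  have hcs : p * s = s * p := (Algebra.commutes a p).symm
  have h2 : (s * s - 3) * (s * s - 3) = 4 * (s * s) := by
    rw [h1]
    calc 2 * (p * s) * (2 * (p * s)) = 4 * (p * (s * p) * s) := by noncomm_ring
      _ = 4 * (p * p * (s * s)) := by rw [← hcs]; noncomm_ring
      _ = _ := by rw [hpp, one_mul]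
  have h3 : algebraMap R (Matrix (Fin n) (Fin n) R) ((a * a - 3) * (a * a - 3))
      = algebraMap R _ (4 * (a * a)) := by
    simpa only [map_mul, map_sub, map_ofNat] using h2
  have h4 := congrFun (congrFun h3 ⟨0, hn⟩) ⟨0, hn⟩
  rw [Matrix.algebraMap_matrix_apply, Matrix.algebraMap_matrix_apply] at h4
  simp at h4
  linear_combination h4

lemma forward {R : Type*} [CommRing R] {n : ℕ} (hn : 1 ≤ n) (h : AllSum R n) :
    (3 : R) = 0 ∧ ∀ x : R, x ^ 3 = x := by
  have hmax : ∀ I : Ideal R, I.IsMaximal → (3 : R) ∈ I ∧ ∀ x : R, x ^ 3 - x ∈ I := by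
    intro I hI
    let _ := Ideal.Quotient.field I
    have hF : AllSum (R ⧸ I) n := h.map (Ideal.Quotient.mk I) Ideal.Quotient.mk_surjective
    have h3 := hF.field_three hn
    have h3' : (Ideal.Quotient.mk I) 3 = 0 := by rw [map_ofNat]; exact h3
    refine ⟨Ideal.Quotient.eq_zero_iff_mem.mp h3', fun x => ?_⟩
    rw [← Ideal.Quotient.eq_zero_iff_mem, map_sub, map_pow]
    set y := Ideal.Quotient.mk I x
    by_cases hy : y = 0
    · rw [hy]; simp
    · have h2 : (2 : R ⧸ I) ≠ 0 := by
        intro h2; exact one_ne_zero (by linear_combination h3 - h2 : (1 : R ⧸ I) = 0)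
      have := hF.unit_eq hn y (isUnit_iff_ne_zero.mpr (mul_ne_zero h2 hy))
      have e : y * (y ^ 3 - y) = 0 := by linear_combination this + (3 * y ^ 2 - 3) * h3
      exact (mul_eq_zero.mp e).resolve_left hy
  have hjac : ∀ x : R, (∀ I : Ideal R, I.IsMaximal → x ∈ I) → ∀ y, IsUnit (1 + y * x) := by
    intro x hx y
    by_contra hc
    obtain ⟨I, hI, hm⟩ := exists_max_ideal_of_mem_nonunits hc
    apply hI.ne_top
    rw [Ideal.eq_top_iff_one]
    have := I.sub_mem hm (I.mul_mem_left y (hx I hI))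
    simpa using this
  have u3 := hjac 3 (fun I hI => (hmax I hI).1)
  have hu2 : IsUnit (2 : R) := by
    have := u3 (-1)
    rw [show (1 : R) + -1 * 3 = -2 by norm_num] at this
    simpa using this.neg
  have hu5 : IsUnit (5 : R) := by
    have := u3 (-2)
    rw [show (1 : R) + -2 * 3 = -5 by norm_num] at this
    simpa using this.neg
  have h3 : (3 : R) = 0 := by
    have := h.unit_eq hn 2 (hu2.mul hu2)
    have e : (5 : R) * 3 = 0 := by linear_combination -this
    exact (hu5.mul_right_eq_zero).mp e
  refine ⟨h3, fun x => ?_⟩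
  have hx := hjac (x ^ 3 - x) (fun I hI => (hmax I hI).2 x)
  set j := x ^ 3 - x with hj
  have hu : IsUnit (1 + j) := by simpa using hx 1
  have hu' : IsUnit (2 + j) := by
    have := (hx (-1)).neg
    have e : -(1 + -1 * j) = 2 + j := by linear_combination (-1 : R) * h3
    rwa [e] at this
  have := h.unit_eq hn (1 + j) (hu2.mul hu)
  have e : ((1 + j) * (1 + j)) * ((2 + j) * j) = 0 := by
    linear_combination this + (3 * (1+j)^2 - 3) * h3
  have e2 := ((hu.mul hu).mul_right_eq_zero).mp e
  have e3 := (hu'.mul_right_eq_zero).mp e2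
  linear_combination e3

section back
open Polynomial

section cyclic
variable {N : Type*} [AddCommGroup N] [Module (ZMod 3) N] [Module (ZMod 3)[X] N]
  [IsScalarTower (ZMod 3) (ZMod 3)[X] N]

/-- multiplication by `X` is a sum of three idempotents -/
def GoodMod (N : Type*) [AddCommGroup N] [Module (ZMod 3) N] [Module (ZMod 3)[X] N] : Prop :=
  ∃ P Q S : Module.End (ZMod 3) N, P * P = P ∧ Q * Q = Q ∧ S * S = S ∧
    ∀ x, P x + Q x + S x = (X : (ZMod 3)[X]) • x

noncomputable def newt (β : ZMod 3) : ℕ → (ZMod 3)[X]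
  | 0 => 1
  | k + 1 => (X - C 1) ^ k * (X - C (1 + β))

lemma newt_monic (β : ZMod 3) (k : ℕ) : (newt β k).Monic := by
  cases k with
  | zero => exact monic_one
  | succ k => exact ((monic_X_sub_C _).pow k).mul (monic_X_sub_C _)

lemma newt_natDegree (β : ZMod 3) (k : ℕ) : (newt β k).natDegree = k := by
  cases k with
  | zero => simp [newt]
  | succ k =>
    rw [newt, Monic.natDegree_mul ((monic_X_sub_C _).pow k) (monic_X_sub_C _),
      (monic_X_sub_C _).natDegree_pow, natDegree_X_sub_C, natDegree_X_sub_C]; simp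

lemma newt_X_zero (β : ZMod 3) : X * newt β 0 = newt β 1 + C (1 + β) * newt β 0 := by
  simp [newt]

lemma newt_X_succ (β : ZMod 3) (k : ℕ) :
    X * newt β (k+1) = newt β (k+2) + newt β (k+1) := by
  simp only [newt, map_one]; ring

lemma newt_span (β : ZMod 3) (v : N) (k : ℕ) : ∀ p : (ZMod 3)[X], p.degree < k →
    p • v ∈ Submodule.span (ZMod 3) (Set.range fun j : Fin k => newt β j • v) := by
  induction k with
  | zero =>
    intro p hp
    have : p = 0 := by simpa using hp
    simp [this]
  | succ k ih =>
    intro p hp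
    have hr : (p - C (p.coeff k) * newt β k).degree < k := by
      rw [degree_lt_iff_coeff_zero]
      intro m hm
      rcases hm.eq_or_lt with rfl | hm
      · have := (newt_monic β k).coeff_natDegree
        rw [newt_natDegree] at this
        simp [this]
      · have h1 : p.coeff m = 0 := by
          rw [degree_lt_iff_coeff_zero] at hp; exact hp m hm
        have h2 : (newt β k).coeff m = 0 :=
          coeff_eq_zero_of_natDegree_lt (by rwa [newt_natDegree])
        simp [h1, h2]
    have h1 := ih _ hr
    have h2 : Submodule.span (ZMod 3) (Set.range fun j : Fin k => newt β j • v) ≤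
        Submodule.span (ZMod 3) (Set.range fun j : Fin (k+1) => newt β j • v) := by
      apply Submodule.span_mono
      rintro _ ⟨j, rfl⟩
      exact ⟨j.castSucc, rfl⟩
    have h3 : p • v = (p - C (p.coeff k) * newt β k) • v + p.coeff k • (newt β k • v) := by
      rw [sub_smul, ← smul_eq_C_mul, smul_assoc, sub_add_cancel]
    rw [h3]
    refine Submodule.add_mem _ (h2 h1) (Submodule.smul_mem _ _ (Submodule.subset_span ⟨Fin.last k, rfl⟩))

noncomputable def newtBasis (β : ZMod 3) (v : N) (n : ℕ) (hn : Module.finrank (ZMod 3) N = n)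
    (hspan : ∀ x : N, ∃ p : (ZMod 3)[X], p.degree < n ∧ p • v = x) :
    Module.Basis (Fin n) (ZMod 3) N :=
  basisOfTopLeSpanOfCardEqFinrank (fun j : Fin n => newt β j • v)
    (fun x _ => by obtain ⟨p, hp, rfl⟩ := hspan x; exact newt_span β v n p hp) (by simp [hn])

lemma newtBasis_apply (β : ZMod 3) (v : N) (n : ℕ) (hn : Module.finrank (ZMod 3) N = n)
    (hspan : ∀ x : N, ∃ p : (ZMod 3)[X], p.degree < n ∧ p • v = x) (j : Fin n) :
    newtBasis β v n hn hspan j = newt β j • v := by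
  simp [newtBasis]

/-- the final step: if the last coefficient is `1 + γ` -/
lemma good_of_coeff (β γ : ZMod 3) (hβ : β * β = β) (hγ : γ * γ = γ) (m : ℕ)
    (b : Module.Basis (Fin (m+2)) (ZMod 3) N) (v : N) (hb : ∀ j, b j = newt β j • v)
    (hlast : b.repr ((X : (ZMod 3)[X]) • b (Fin.last (m+1))) (Fin.last (m+1)) = 1 + γ) :
    GoodMod N := by
  classical
  set w : ℕ → N := fun j => newt β j • v with hw
  have hbw : ∀ (j : ℕ) (hj : j < m + 2), w j = b ⟨j, hj⟩ := fun j hj => (hb ⟨j, hj⟩).symm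
  have hX0 : (X : (ZMod 3)[X]) • w 0 = w 1 + (1 + β) • w 0 := by
    simp only [hw]
    rw [smul_smul, newt_X_zero, add_smul, ← smul_eq_C_mul, smul_assoc]
  have hXs : ∀ k, 1 ≤ k → (X : (ZMod 3)[X]) • w k = w (k+1) + w k := by
    intro k hk
    obtain ⟨k, rfl⟩ : ∃ l, k = l + 1 := ⟨k - 1, by omega⟩
    simp only [hw]
    rw [smul_smul, newt_X_succ, add_smul]
  let p : ℕ → N := fun j => if Even j then (if j < m + 1 then w j + w (j+1) else γ • w j) else 0
  let q : ℕ → N := fun j => if j = 0 then β • w 0 else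
    if Odd j then (if j < m + 1 then w j + w (j+1) else γ • w j) else 0
  let P : Module.End (ZMod 3) N := b.constr (ZMod 3) fun j => p j
  let Q : Module.End (ZMod 3) N := b.constr (ZMod 3) fun j => q j
  have hP : ∀ j, j < m + 2 → P (w j) = p j := by
    intro j hj; rw [hbw j hj]; exact b.constr_basis _ _ _
  have hQ : ∀ j, j < m + 2 → Q (w j) = q j := by
    intro j hj; rw [hbw j hj]; exact b.constr_basis _ _ _
  let z : N := (X : (ZMod 3)[X]) • w (m+1) - γ • w (m+1)
  let S : Module.End (ZMod 3) N := (b.coord (Fin.last (m+1))).smulRight z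
  have hS : ∀ x, S x = b.repr x (Fin.last (m+1)) • z := fun x => rfl
  refine ⟨P, Q, S, ?_, ?_, ?_, ?_⟩
  · refine b.ext fun j => ?_
    obtain ⟨j, hj⟩ := j
    rw [← hbw j hj, Module.End.mul_apply, hP j hj]
    by_cases he : Even j
    · by_cases hl : j < m + 1
      · have h1 : ¬ Even (j + 1) := by simpa [Nat.even_add_one] using he
        have e1 : p j = w j + w (j+1) := by simp only [p, if_pos he, if_pos hl]
        have e2 : p (j+1) = 0 := by simp only [p, if_neg h1]
        rw [e1, map_add, hP j hj, hP (j+1) (by omega), e1, e2, add_zero]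
      · have e1 : p j = γ • w j := by simp only [p, if_pos he, if_neg hl]
        rw [e1, map_smul, hP j hj, e1, smul_smul, hγ]
    · have e1 : p j = 0 := by simp only [p, if_neg he]
      rw [e1, map_zero]
  · refine b.ext fun j => ?_
    obtain ⟨j, hj⟩ := j
    rw [← hbw j hj, Module.End.mul_apply, hQ j hj]
    by_cases h0 : j = 0
    · subst h0
      have e1 : q 0 = β • w 0 := by simp [q]
      rw [e1, map_smul, hQ 0 hj, e1, smul_smul, hβ]
    by_cases he : Odd j
    · by_cases hl : j < m + 1
      · have h1 : ¬ Odd (j + 1) := by simpa [Nat.odd_add_one] using he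
        have e1 : q j = w j + w (j+1) := by simp only [q, if_pos he, if_pos hl, if_neg h0]
        have e2 : q (j+1) = 0 := by
          simp only [q, if_neg h1, if_neg (Nat.succ_ne_zero j)]
        rw [e1, map_add, hQ j hj, hQ (j+1) (by omega), e1, e2, add_zero]
      · have e1 : q j = γ • w j := by simp only [q, if_pos he, if_neg hl, if_neg h0]
        rw [e1, map_smul, hQ j hj, e1, smul_smul, hγ]
    · have e1 : q j = 0 := by simp only [q, if_neg he, if_neg h0]
      rw [e1, map_zero]
  · have hz : b.repr z (Fin.last (m+1)) = 1 := by
      have hwl : w (m+1) = b (Fin.last (m+1)) := hbw (m+1) (by omega)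
      simp only [z]
      rw [hwl, map_sub, Finsupp.sub_apply, hlast]
      simp
    ext x
    rw [Module.End.mul_apply, hS x, map_smul, hS z, hz, one_smul]
  · have hfin : P + Q + S = Algebra.lsmul (ZMod 3) (ZMod 3) N (X : (ZMod 3)[X]) := by
      refine b.ext fun j => ?_
      obtain ⟨j, hj⟩ := j
      rw [← hbw j hj, LinearMap.add_apply, LinearMap.add_apply, hP j hj, hQ j hj, hS,
        Algebra.lsmul_coe]
      beta_reduce
      by_cases hl : j < m + 1
      · have hc : b.repr (w j) (Fin.last (m+1)) = 0 := by
          rw [hbw j hj, Module.Basis.repr_self, Finsupp.single_apply, if_neg]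
          intro h; have := congrArg Fin.val h; simp at this; omega
        rw [hc, zero_smul, add_zero]
        by_cases h0 : j = 0
        · subst h0
          rw [hX0]; simp [p, q]; module
        · rw [hXs j (by omega)]
          by_cases he : Even j
          · have ho : ¬ Odd j := by simpa using he
            simp only [p, q, if_pos he, if_pos hl, if_neg h0, if_neg ho]; abel
          · have ho : Odd j := by simpa using he
            simp only [p, q, if_neg he, if_pos hl, if_neg h0, if_pos ho]; abel
      · obtain rfl : j = m + 1 := by omega
        have hc : b.repr (w (m+1)) (Fin.last (m+1)) = 1 := by
          have hwl : w (m+1) = b (Fin.last (m+1)) := hbw (m+1) (by omega)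
          rw [hwl]; simp
        rw [hc, one_smul]
        have hpq : p (m+1) + q (m+1) = γ • w (m+1) := by
          by_cases he : Even (m+1)
          · have ho : ¬ Odd (m+1) := by simpa using he
            simp only [p, q, if_pos he, if_neg hl, if_neg (Nat.succ_ne_zero m), if_neg ho, add_zero]
          · have ho : Odd (m+1) := by simpa using he
            simp only [p, q, if_neg he, if_neg hl, if_neg (Nat.succ_ne_zero m), if_pos ho, zero_add]
        rw [hpq]; simp only [z]; abel
    intro x
    have := LinearMap.congr_fun hfin x
    simpa using this

lemma trace_newt (β : ZMod 3) (m : ℕ)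
    (b : Module.Basis (Fin (m+2)) (ZMod 3) N) (v : N) (hb : ∀ j, b j = newt β j • v) :
    LinearMap.trace (ZMod 3) N (Algebra.lsmul (ZMod 3) (ZMod 3) N (X : (ZMod 3)[X])) =
    1 + β + m + b.repr ((X : (ZMod 3)[X]) • b (Fin.last (m+1))) (Fin.last (m+1)) := by
  rw [LinearMap.trace_eq_matrix_trace _ b, Matrix.trace, Fin.sum_univ_castSucc]
  simp only [Matrix.diag_apply, LinearMap.toMatrix_apply, Algebra.lsmul_coe]
  congr 1
  rw [Fin.sum_univ_succ]
  have h0 : b.repr ((X : (ZMod 3)[X]) • b (Fin.castSucc 0)) (Fin.castSucc 0) = 1 + β := by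
    have : (X : (ZMod 3)[X]) • b (Fin.castSucc 0) = b 1 + (1 + β) • b (Fin.castSucc 0) := by
      rw [hb, hb, smul_smul]
      have := newt_X_zero β
      simp only [Fin.castSucc_zero, Fin.val_zero, Fin.val_one] at this ⊢
      rw [this, add_smul, ← smul_eq_C_mul, smul_assoc]
    rw [this]; simp
  have hs : ∀ i : Fin m, b.repr ((X : (ZMod 3)[X]) • b (Fin.castSucc i.succ)) (Fin.castSucc i.succ) = 1 := by
    intro i
    have : (X : (ZMod 3)[X]) • b (Fin.castSucc i.succ) = b i.succ.succ + b (Fin.castSucc i.succ) := by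
      rw [hb, hb, smul_smul]
      have := newt_X_succ β i
      simp only [Fin.val_castSucc, Fin.val_succ] at this ⊢
      rw [this, add_smul]
    rw [this]
    rw [map_add, Finsupp.add_apply, Module.Basis.repr_self, Module.Basis.repr_self,
      Finsupp.single_apply, Finsupp.single_apply, if_pos rfl, if_neg, zero_add]
    intro h; have := congrArg Fin.val h; simp at this
  rw [h0, Finset.sum_congr rfl (fun i _ => hs i)]
  simp

lemma good_cyclic (v : N) (n : ℕ) (hn : Module.finrank (ZMod 3) N = n)
    (hspan : ∀ x : N, ∃ p : (ZMod 3)[X], p.degree < n ∧ p • v = x) : GoodMod N := by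
  match n, hn, hspan with
  | 0, hn, hspan =>
    have h0 : ∀ x : N, x = 0 := by
      intro x
      obtain ⟨p, hp, rfl⟩ := hspan x
      have : p = 0 := by simpa using hp
      simp [this]
    refine ⟨0, 0, 0, by simp, by simp, by simp, fun x => ?_⟩
    rw [h0 x]; simp
  | 1, hn, hspan =>
    obtain ⟨a, ha⟩ : ∃ a : ZMod 3, ∀ x : N, (X : (ZMod 3)[X]) • x = a • x := by
      have hc : ∀ x : N, ∃ c : ZMod 3, x = c • v := by
        intro x
        obtain ⟨p, hp, rfl⟩ := hspan x
        have : p = C (p.coeff 0) := eq_C_of_degree_le_zero (by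
          have := Nat.WithBot.lt_one_iff_le_zero.mp hp; exact this)
        refine ⟨p.coeff 0, ?_⟩
        conv_lhs => rw [this, ← mul_one (C _), ← smul_eq_C_mul, smul_assoc, one_smul]
      obtain ⟨a, ha⟩ := hc ((X : (ZMod 3)[X]) • v)
      refine ⟨a, fun x => ?_⟩
      obtain ⟨c, rfl⟩ := hc x
      rw [smul_comm, ha, smul_comm]
    obtain ⟨x, y, z, hx, hy, hz, hs⟩ : ∃ x y z : ZMod 3, x * x = x ∧ y * y = y ∧ z * z = z ∧
        x + y + z = a := by
      clear ha; revert a; decide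
    refine ⟨x • 1, y • 1, z • 1, ?_, ?_, ?_, fun t => ?_⟩
    · rw [smul_mul_smul_comm, hx, one_mul]
    · rw [smul_mul_smul_comm, hy, one_mul]
    · rw [smul_mul_smul_comm, hz, one_mul]
    · rw [ha, ← hs]; simp [add_smul]
  | m + 2, hn, hspan =>
    have t0 := trace_newt 0 m (newtBasis 0 v _ hn hspan) v (newtBasis_apply 0 v _ hn hspan)
    have t1 := trace_newt 1 m (newtBasis 1 v _ hn hspan) v (newtBasis_apply 1 v _ hn hspan)
    have g0 := fun γ hγ => good_of_coeff 0 γ (by simp) hγ m (newtBasis 0 v _ hn hspan) v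
      (newtBasis_apply 0 v _ hn hspan)
    have g1 := fun γ hγ => good_of_coeff 1 γ (by simp) hγ m (newtBasis 1 v _ hn hspan) v
      (newtBasis_apply 1 v _ hn hspan)
    rw [t0] at t1
    generalize (newtBasis 0 v _ hn hspan).repr ((X : (ZMod 3)[X]) • (newtBasis 0 v _ hn hspan)
      (Fin.last (m+1))) (Fin.last (m+1)) = c0 at t1 g0
    generalize (newtBasis 1 v _ hn hspan).repr ((X : (ZMod 3)[X]) • (newtBasis 1 v _ hn hspan)
      (Fin.last (m+1))) (Fin.last (m+1)) = c1 at t1 g1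
    have hc : c0 = c1 + 1 := by linear_combination t1
    have : c0 = 1 + 0 ∨ c0 = 1 + 1 ∨ c1 = 1 + 1 := by
      subst hc; clear t1 g0 g1 t0; revert c1; decide
    rcases this with h | h | h
    · exact g0 0 (by simp) h
    · exact g0 1 (by simp) h
    · exact g1 1 (by simp) h

end cyclic

lemma good_quot (q : (ZMod 3)[X]) (hq : q ≠ 0) :
    GoodMod ((ZMod 3)[X] ⧸ Submodule.span (ZMod 3)[X] {q}) := by
  refine good_cyclic (Submodule.Quotient.mk 1) q.natDegree ?_ ?_
  · exact finrank_quotient_span_eq_natDegree (f := q)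
  · intro x
    obtain ⟨p, rfl⟩ := Submodule.Quotient.mk_surjective _ x
    refine ⟨p % q, ?_, ?_⟩
    · rw [← degree_eq_natDegree hq]; exact degree_mod_lt p hq
    · rw [← Submodule.Quotient.mk_smul, Submodule.Quotient.eq, smul_eq_mul, mul_one,
        Submodule.mem_span_singleton]
      refine ⟨-(p / q), ?_⟩
      have := EuclideanDomain.div_add_mod p q
      rw [smul_eq_mul]
      linear_combination (-1 : (ZMod 3)[X]) * this

lemma good_equiv {M N : Type*} [AddCommGroup M] [Module (ZMod 3) M] [Module (ZMod 3)[X] M]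
    [IsScalarTower (ZMod 3) (ZMod 3)[X] M]
    [AddCommGroup N] [Module (ZMod 3) N] [Module (ZMod 3)[X] N]
    [IsScalarTower (ZMod 3) (ZMod 3)[X] N] (e : M ≃ₗ[(ZMod 3)[X]] N) (h : GoodMod N) :
    GoodMod M := by
  obtain ⟨P, Q, S, hP, hQ, hS, hs⟩ := h
  let e' : M ≃ₗ[ZMod 3] N := e.restrictScalars (ZMod 3)
  refine ⟨e'.symm.conj P, e'.symm.conj Q, e'.symm.conj S, ?_, ?_, ?_, fun x => ?_⟩
  · rw [Module.End.mul_eq_comp, ← LinearEquiv.conj_comp, ← Module.End.mul_eq_comp, hP]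
  · rw [Module.End.mul_eq_comp, ← LinearEquiv.conj_comp, ← Module.End.mul_eq_comp, hQ]
  · rw [Module.End.mul_eq_comp, ← LinearEquiv.conj_comp, ← Module.End.mul_eq_comp, hS]
  · simp only [LinearEquiv.conj_apply_apply, LinearEquiv.symm_symm]
    rw [← map_add, ← map_add, hs]
    show e.symm ((X : (ZMod 3)[X]) • e x) = _
    rw [map_smul, e.symm_apply_apply]

lemma good_pi {ι : Type*} [Fintype ι] (M : ι → Type*) [∀ i, AddCommGroup (M i)]
    [∀ i, Module (ZMod 3) (M i)] [∀ i, Module (ZMod 3)[X] (M i)] (h : ∀ i, GoodMod (M i)) :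
    GoodMod (∀ i, M i) := by
  choose P Q S hP hQ hS hs using h
  refine ⟨LinearMap.piMap P, LinearMap.piMap Q, LinearMap.piMap S, ?_, ?_, ?_, fun x => ?_⟩
  · ext1 x; ext i; exact LinearMap.congr_fun (hP i) (x i)
  · ext1 x; ext i; exact LinearMap.congr_fun (hQ i) (x i)
  · ext1 x; ext i; exact LinearMap.congr_fun (hS i) (x i)
  · ext i; exact hs i (x i)

open DirectSum in
lemma end_three {V : Type} [AddCommGroup V] [Module (ZMod 3) V] [Module.Finite (ZMod 3) V]
    (f : Module.End (ZMod 3) V) : ∃ P Q S : Module.End (ZMod 3) V,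
      P * P = P ∧ Q * Q = Q ∧ S * S = S ∧ P + Q + S = f := by
  have ht : Module.IsTorsion (ZMod 3)[X] (Module.AEval' f) :=
    Module.AEval.isTorsion_of_finiteDimensional (ZMod 3) V f
  obtain ⟨ι, _, p, hp, e, ⟨E⟩⟩ := Module.equiv_directSum_of_isTorsion ht
  classical
  have hg : GoodMod (Module.AEval' f) := by
    let E' := E.trans (DirectSum.linearEquivFunOnFintype (ZMod 3)[X] ι _)
    exact good_equiv E' (good_pi _ fun i => good_quot _ (pow_ne_zero _ (hp i).ne_zero))
  obtain ⟨P, Q, S, hP, hQ, hS, hs⟩ := hg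
  let o := (Module.AEval'.of f).symm
  refine ⟨o.conj P, o.conj Q, o.conj S, ?_, ?_, ?_, ?_⟩
  · rw [Module.End.mul_eq_comp, ← LinearEquiv.conj_comp, ← Module.End.mul_eq_comp, hP]
  · rw [Module.End.mul_eq_comp, ← LinearEquiv.conj_comp, ← Module.End.mul_eq_comp, hQ]
  · rw [Module.End.mul_eq_comp, ← LinearEquiv.conj_comp, ← Module.End.mul_eq_comp, hS]
  · ext x
    simp only [LinearMap.add_apply, LinearEquiv.conj_apply_apply]
    rw [← map_add, ← map_add, hs]
    simp [o, Module.AEval'.X_smul_of]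

lemma mat_three {n : ℕ} (A : Matrix (Fin n) (Fin n) (ZMod 3)) :
    ∃ U V W : Matrix (Fin n) (Fin n) (ZMod 3),
      U * U = 1 ∧ V * V = 1 ∧ W * W = 1 ∧ A = U + V + W := by
  obtain ⟨P, Q, S, hP, hQ, hS, hs⟩ := end_three (Matrix.toLinAlgEquiv' (-A))
  let φ := (Matrix.toLinAlgEquiv' (R := ZMod 3) (n := Fin n)).symm
  have h3 : (3 : Matrix (Fin n) (Fin n) (ZMod 3)) = 0 := by
    have := congrArg (Matrix.scalar (Fin n)) (show (3 : ZMod 3) = 0 from rfl)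
    rwa [map_ofNat, map_zero] at this
  have key : ∀ P : Module.End (ZMod 3) (Fin n → ZMod 3), P * P = P →
      (-(1 + φ P)) * (-(1 + φ P)) = 1 := by
    intro P hP
    have e : (-(1 + φ P)) * (-(1 + φ P)) = 1 + 2 * φ P + φ P * φ P := by noncomm_ring
    rw [e, ← map_mul, hP]
    have e2 : 1 + 2 * φ P + φ P = 1 + 3 * φ P := by noncomm_ring
    rw [e2, h3]; simp
  refine ⟨_, _, _, key P hP, key Q hQ, key S hS, ?_⟩
  have hA : A = - (φ P + φ Q + φ S) := by
    rw [← map_add, ← map_add, hs]; simp [φ]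
  have : -(1 + φ P) + -(1 + φ Q) + -(1 + φ S) = -(φ P + φ Q + φ S) - 3 := by
    rw [show (3 : Matrix (Fin n) (Fin n) (ZMod 3)) = 1 + 1 + 1 by norm_num]; abel
  rw [this, h3, sub_zero, hA]

lemma vanish {R : Type*} [CommRing R] (hx : ∀ x : R, x ^ 3 = x)
    (φ : ZMod 3 →+* R) {σ : Type*} (p : MvPolynomial σ (ZMod 3))
    (hp : ∀ c, MvPolynomial.eval c p = 0) (a : σ → R) : MvPolynomial.eval₂ φ a p = 0 := by
  have hnil : IsNilpotent (MvPolynomial.eval₂ φ a p) := by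
    rw [nilpotent_iff_mem_prime]
    intro J hJ
    rw [← Ideal.Quotient.eq_zero_iff_mem]
    have hc : ∀ y : R ⧸ J, ∃ c : ZMod 3, (Ideal.Quotient.mk J).comp φ c = y := by
      intro y
      obtain ⟨x, rfl⟩ := Ideal.Quotient.mk_surjective y
      have e : (Ideal.Quotient.mk J x) * ((Ideal.Quotient.mk J x - 1) * (Ideal.Quotient.mk J x + 1)) = 0 := by
        have := congrArg (Ideal.Quotient.mk J) (hx x)
        rw [map_pow] at this
        linear_combination this
      rcases mul_eq_zero.mp e with h | h
      · exact ⟨0, by rw [h, map_zero]⟩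
      · rcases mul_eq_zero.mp h with h | h
        · exact ⟨1, by rw [map_one]; linear_combination -h⟩
        · exact ⟨-1, by rw [map_neg, map_one]; linear_combination -h⟩
    choose c hc using fun i => hc (Ideal.Quotient.mk J (a i))
    have h := MvPolynomial.eval₂_comp_left (Ideal.Quotient.mk J) φ a p
    rw [h, show (Ideal.Quotient.mk J) ∘ a = ((Ideal.Quotient.mk J).comp φ) ∘ c from
      funext fun i => (hc i).symm]
    rw [← MvPolynomial.eval₂_comp, hp, map_zero]
  obtain ⟨k, hk⟩ := hnil
  have hred : ∀ x : R, x ^ 2 = 0 → x = 0 := by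
    intro x h; rw [← hx x, pow_succ, h, zero_mul]
  have : IsReduced R := (isReduced_iff_pow_one_lt 2 (by norm_num)).mpr hred
  exact eq_zero_of_pow_eq_zero hk

lemma backward {R : Type*} [CommRing R] (h3 : (3 : R) = 0) (hx : ∀ x : R, x ^ 3 = x) (n : ℕ)
    (A : Matrix (Fin n) (Fin n) R) :
      ∃ U₁ U₂ U₃ : Matrix (Fin n) (Fin n) R,
        U₁ ^ 2 = 1 ∧ U₂ ^ 2 = 1 ∧ U₃ ^ 2 = 1 ∧ A = U₁ + U₂ + U₃ := by
  let φ : ZMod 3 →+* R := (Ideal.Quotient.lift (Ideal.span {((3 : ℕ) : ℤ)}) (Int.castRingHom R) (by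
    intro a ha
    obtain ⟨k, rfl⟩ := Ideal.mem_span_singleton.mp ha
    simp [h3])).comp (Int.quotientSpanNatEquivZMod 3).symm.toRingHom
  let a : Fin n × Fin n → R := fun t => A t.1 t.2
  let ψ := MvPolynomial.eval₂Hom φ a
  choose U V W hU hV hW hs using fun c : Fin n × Fin n → ZMod 3 =>
    mat_three (Matrix.of fun i j => c (i, j))
  have hpoly : ∀ g : (Fin n × Fin n → ZMod 3) → ZMod 3,
      ∃ p : MvPolynomial (Fin n × Fin n) (ZMod 3), ∀ c, MvPolynomial.eval c p = g c := by
    intro g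
    have : g ∈ Submodule.map (MvPolynomial.evalₗ (ZMod 3) (Fin n × Fin n))
        (MvPolynomial.restrictDegree (Fin n × Fin n) (ZMod 3) (Fintype.card (ZMod 3) - 1)) := by
      rw [MvPolynomial.map_restrict_dom_evalₗ]; trivial
    obtain ⟨p, -, hp⟩ := this
    exact ⟨p, fun c => congrFun hp c⟩
  have hmat : ∀ G : (Fin n × Fin n → ZMod 3) → Matrix (Fin n) (Fin n) (ZMod 3),
      ∃ p : Matrix (Fin n) (Fin n) (MvPolynomial (Fin n × Fin n) (ZMod 3)),
        ∀ c, (MvPolynomial.eval c).mapMatrix p = G c := by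
    intro G
    choose p hp using fun i j => hpoly (fun c => G c i j)
    exact ⟨Matrix.of p, fun c => by ext i j; exact hp i j c⟩
  have hvan : ∀ p : Matrix (Fin n) (Fin n) (MvPolynomial (Fin n × Fin n) (ZMod 3)),
      (∀ c, (MvPolynomial.eval c).mapMatrix p = 0) → ψ.mapMatrix p = 0 := by
    intro p hp
    ext i j
    exact vanish hx φ (p i j) (fun c => congrFun (congrFun (hp c) i) j) a
  obtain ⟨u, hu⟩ := hmat U
  obtain ⟨v, hv⟩ := hmat V
  obtain ⟨w, hw⟩ := hmat W
  have hinv : ∀ (p : Matrix (Fin n) (Fin n) (MvPolynomial (Fin n × Fin n) (ZMod 3))) (G : (Fin n × Fin n → ZMod 3) → Matrix (Fin n) (Fin n) (ZMod 3)),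
      (∀ c, (MvPolynomial.eval c).mapMatrix p = G c) → (∀ c, G c * G c = 1) →
      (ψ.mapMatrix p) ^ 2 = 1 := by
    intro p G hp hG
    have := hvan (p ^ 2 - 1) (fun c => by rw [map_sub, map_pow, map_one, hp, sq, hG, sub_self])
    rwa [map_sub, map_pow, map_one, sub_eq_zero] at this
  refine ⟨ψ.mapMatrix u, ψ.mapMatrix v, ψ.mapMatrix w, hinv u U hu hU, hinv v V hv hV,
    hinv w W hw hW, ?_⟩
  have := hvan (Matrix.of (fun i j => MvPolynomial.X (i, j)) - (u + v + w)) (fun c => by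
    rw [map_sub, map_add, map_add, hu, hv, hw, ← hs, sub_eq_zero]
    ext i j; simp)
  rw [map_sub, map_add, map_add, sub_eq_zero] at this
  rw [← this]
  ext i j
  simp [ψ, a]

end back

/-- For a commutative ring `R` and `n ≥ 1`, every matrix in `M_n(R)` is a sum of three
involutive matrices if and only if `3 = 0` in `R` and `R` satisfies the identity
`x^3 = x` (i.e. `R` is a subdirect product of copies of `ℤ/3`). -/
theorem matrix_sum_three_involutions_iff (R : Type*) [CommRing R] (n : ℕ) (hn : 1 ≤ n) :
    (∀ A : Matrix (Fin n) (Fin n) R,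
      ∃ U₁ U₂ U₃ : Matrix (Fin n) (Fin n) R,
        U₁ ^ 2 = 1 ∧ U₂ ^ 2 = 1 ∧ U₃ ^ 2 = 1 ∧ A = U₁ + U₂ + U₃) ↔
    ((3 : R) = 0 ∧ ∀ x : R, x ^ 3 = x) := by
  exact ⟨fun h => forward hn h, fun h A => backward h.1 h.2 n A⟩
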